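/- Let μ_α and μ_β satisfy Assumption 2. Then there exist constants C_α > 0 and C_β > 0 such that dist(ω_α(z), supp(μ_β)) ≥ C_α and dist(ω_β(z), supp(μ_α)) ≥ C_β for every z ∈ 𝓙. -/

import Mathlib

open MeasureTheory Topology Filter Set

noncomputable section

/-- The open upper half-plane ℂ⁺. -/
def UHP : Set ℂ := {z : ℂ | 0 < z.im}

/-- The closed upper half-plane ℂ⁺ ∪ ℝ. -/
def CUHP : Set ℂ := {z : ℂ | 0 ≤ z.im}

/-- Cauchy–Stieltjes transform `m_μ(z) = ∫ 1/(x−z) dμ(x)`. -/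
def stT (μ : Measure ℝ) (z : ℂ) : ℂ := ∫ x, ((x : ℂ) - z)⁻¹ ∂μ

/-- Real-valued Cauchy–Stieltjes transform at real points (outside the support). -/
def stTR (μ : Measure ℝ) (E : ℝ) : ℝ := ∫ x, (x - E)⁻¹ ∂μ

/-- Negative reciprocal Cauchy–Stieltjes transform `F_μ = −1/m_μ`. -/
def nrT (μ : Measure ℝ) (z : ℂ) : ℂ := -(stT μ z)⁻¹

/-- Support of a Borel measure on ℝ (the smallest closed set of full measure). -/
def msupp (μ : Measure ℝ) : Set ℝ := {x : ℝ | ∀ ε > 0, 0 < μ (Set.Ioo (x - ε) (x + ε))}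

/-- Absolutely continuous part of μ with respect to Lebesgue measure. -/
def acPart (μ : Measure ℝ) : Measure ℝ := volume.withDensity (μ.rnDeriv volume)

/-- `I_μ(ω) = ∫ 1/|x−ω|² dμ(x)`. -/
def Ifun (μ : Measure ℝ) (w : ℂ) : ℝ := ∫ x, (Complex.normSq ((x : ℂ) - w))⁻¹ ∂μ

/-- A sequence of the upper half-plane converging non-tangentially to `E ∈ ℝ`. -/
def NonTangentialSeq (z : ℕ → ℂ) (E : ℝ) : Prop :=
  (∀ n, z n ∈ UHP) ∧ Tendsto z atTop (𝓝 (E : ℂ)) ∧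
    ∃ C : ℝ, ∀ n, |(z n).re - E| ≤ C * (z n).im

/-- The density `ρ_μ` of the a.c. part of `μ` vanishes at `x`
(via the Stieltjes inversion formula). -/
def densityVanishesAt (μ : Measure ℝ) (x : ℝ) : Prop :=
  Tendsto (fun η : ℝ => (stT μ ((x : ℂ) + (η : ℂ) * Complex.I)).im) (𝓝[>] 0) (𝓝 0)

/-- The density `ρ_μ` of the a.c. part of `μ` diverges at `x`. -/
def densityDivergesAt (μ : Measure ℝ) (x : ℝ) : Prop :=
  Tendsto (fun η : ℝ => (stT μ ((x : ℂ) + (η : ℂ) * Complex.I)).im) (𝓝[>] 0) atTop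

/-- Assumption 1. -/
structure Assumption1 (μ : Measure ℝ) (nac npp nppout : ℕ)
    (Em Ep : Fin nac → ℝ) (atom : Fin npp → ℝ) (ρ : ℝ → ℝ) : Prop where
  prob : IsProbabilityMeasure μ
  compact : IsCompact (msupp μ)
  nac_pos : 1 ≤ nac
  npp_pos : 1 ≤ npp
  ρ_nonneg : ∀ x, 0 ≤ ρ x
  ac_density : acPart μ = volume.withDensity fun x => ENNReal.ofReal (ρ x)
  sing_atomic : μ.singularPart volume = ∑ j : Fin npp, μ {atom j} • Measure.dirac (atom j)
  atom_inj : Function.Injective atom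
  atom_pos : ∀ j, 0 < μ {atom j}
  lt : ∀ j, Em j < Ep j
  ordered : ∀ i j : Fin nac, i < j → Ep i < Em j
  supp_ac : msupp (acPart μ) = ⋃ j, Set.Icc (Em j) (Ep j)
  out_card : Nat.card {j : Fin npp // atom j ∉ msupp (acPart μ)} = nppout
  no_atom_endpoint : ∀ j i, atom j ≠ Em i ∧ atom j ≠ Ep i
  power_law : ∀ j, ∃ tm tp C : ℝ, -1 < tm ∧ tm < 1 ∧ -1 < tp ∧ tp < 1 ∧ 1 ≤ C ∧
    ∀ᵐ x ∂volume, x ∈ Set.Icc (Em j) (Ep j) →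
      C⁻¹ < ρ x / ((x - Em j) ^ tm * (Ep j - x) ^ tp) ∧
      ρ x / ((x - Em j) ^ tm * (Ep j - x) ^ tp) < C

/-- The subordination function `ω_t` for the free convolution semi-group,
together with its continuous extension to `ℂ⁺ ∪ ℝ`. -/
structure IsSubordT (μ : Measure ℝ) (t : ℝ) (ω : ℂ → ℂ) : Prop where
  diff : DifferentiableOn ℂ ω UHP
  maps : ∀ z ∈ UHP, ω z ∈ UHP
  imLe : ∀ z ∈ UHP, z.im ≤ (ω z).im
  limTop : Tendsto (fun η : ℝ => ω ((η : ℂ) * Complex.I) / ((η : ℂ) * Complex.I))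
      atTop (𝓝 1)
  eqn : ∀ z ∈ UHP, (t : ℂ) * ω z - z = ((t : ℂ) - 1) * nrT μ (ω z)
  cont : ContinuousOn ω CUHP

/-- `μt = μ^{⊞ t}`: the probability measure whose negative reciprocal Cauchy–Stieltjes
transform is `F_μ ∘ ω_t`, i.e. whose Cauchy–Stieltjes transform is `m_μ ∘ ω_t`. -/
def IsFreePow (μ : Measure ℝ) (ω : ℂ → ℂ) (μt : Measure ℝ) : Prop :=
  IsProbabilityMeasure μt ∧ ∀ z ∈ UHP, stT μt z = stT μ (ω z)

/-- Assumption 2 (for one of the two measures). -/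
structure Assumption2 (μ : Measure ℝ) (n : ℕ) (Am Ap : Fin n → ℝ) (ρ : ℝ → ℝ) : Prop where
  prob : IsProbabilityMeasure μ
  n_pos : 1 ≤ n
  centered : ∫ x, x ∂μ = 0
  ρ_nonneg : ∀ x, 0 ≤ ρ x
  ac : μ = volume.withDensity fun x => ENNReal.ofReal (ρ x)
  lt : ∀ j, Am j < Ap j
  ordered : ∀ i j : Fin n, i < j → Ap i < Am j
  supp_eq : msupp μ = ⋃ j, Set.Icc (Am j) (Ap j)
  power_law : ∀ j, ∃ sm sp C : ℝ, -1 < sm ∧ sm < 1 ∧ -1 < sp ∧ sp < 1 ∧ 1 ≤ C ∧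
    ∀ᵐ x ∂volume, x ∈ Set.Icc (Am j) (Ap j) →
      C⁻¹ < ρ x / ((x - Am j) ^ sm * (Ap j - x) ^ sp) ∧
      ρ x / ((x - Am j) ^ sm * (Ap j - x) ^ sp) < C

/-- The pair of subordination functions for the free additive convolution `μa ⊞ μb`. -/
structure IsSubordPair (μa μb : Measure ℝ) (ωa ωb : ℂ → ℂ) : Prop where
  diff_a : DifferentiableOn ℂ ωa UHP
  diff_b : DifferentiableOn ℂ ωb UHP
  maps_a : ∀ z ∈ UHP, ωa z ∈ UHP
  maps_b : ∀ z ∈ UHP, ωb z ∈ UHP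
  imLe_a : ∀ z ∈ UHP, z.im ≤ (ωa z).im
  imLe_b : ∀ z ∈ UHP, z.im ≤ (ωb z).im
  lim_a : Tendsto (fun η : ℝ => ωa ((η : ℂ) * Complex.I) / ((η : ℂ) * Complex.I))
      atTop (𝓝 1)
  lim_b : Tendsto (fun η : ℝ => ωb ((η : ℂ) * Complex.I) / ((η : ℂ) * Complex.I))
      atTop (𝓝 1)
  eqn_a : ∀ z ∈ UHP, ωa z + ωb z - z = nrT μa (ωb z)
  eqn_b : ∀ z ∈ UHP, ωa z + ωb z - z = nrT μb (ωa z)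

/-- `μab = μa ⊞ μb`: the probability measure whose negative reciprocal Cauchy–Stieltjes
transform is `F_{μa} ∘ ω_b`, i.e. whose Cauchy–Stieltjes transform is `m_{μa} ∘ ω_b`. -/
def IsFreeConv (μa μb : Measure ℝ) (ωb : ℂ → ℂ) (μab : Measure ℝ) : Prop :=
  IsProbabilityMeasure μab ∧ ∀ z ∈ UHP, stT μab z = stT μa (ωb z)

/-- `Ω` is the continuous extension of `ω` to `ℂ⁺ ∪ ℝ`, with values in the
Riemann sphere `ℂ ∪ {∞}`. -/
def ExtendsToRP (ω : ℂ → ℂ) (Ω : ℂ → OnePoint ℂ) : Prop :=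
  ContinuousOn Ω CUHP ∧ ∀ z ∈ UHP, Ω z = (ω z : OnePoint ℂ)

/-- `μhat` is the measure in the Nevanlinna representation
`F_μ(ω) − ω = −∫ x dμ + ∫ 1/(x−ω) dμ̂(x)`. -/
def IsNevanHat (μ μhat : Measure ℝ) : Prop :=
  IsFiniteMeasure μhat ∧ ∀ z ∈ UHP,
    nrT μ z - z = -((∫ x, x ∂μ : ℝ) : ℂ) + ∫ x, ((x : ℂ) - z)⁻¹ ∂μhat

end

/-!
Comparing imaginary parts in the Nevanlinna representations of `F_μa` and `F_μb` along the
subordination equations gives `I_μ̂a(ω_b(z)) · I_μ̂b(ω_a(z)) ≤ 1` on the upper half-plane. The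
first factor is bounded below by a multiple of `(1 + |ω_b(z)|)⁻²`, because `μa` is not a point
mass. Since `ω_b = F_μb(ω_a) - ω_a + z`, this forces `I_μ̂b(ω_a(z)) = O(1 + |F_μb(ω_a(z))|²)` as
long as `ω_a` stays bounded. But as `w` tends to a point of the support of `μb`, the power law
bounds make `I_μb(w)` blow up, and Cauchy–Schwarz near that point gives `|m_μb(w)|² = o(I_μb(w))`;
multiplying by `|F_μb(w)|²` yields `1 + |F_μb(w)|² = o(I_μ̂b(w))`. Hence `ω_a` cannot approach the
support of `μb`, and compactness makes the separation uniform.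
-/

section CauchyTransform

variable {μ : Measure ℝ} {w : ℂ}

lemma ofReal_sub_ne_zero (hw : w ∈ UHP) (x : ℝ) : (x : ℂ) - w ≠ 0 := fun h ↦ by
  have him : -w.im = 0 := by simpa using congrArg Complex.im h
  exact (show 0 < w.im from hw).ne' (neg_eq_zero.1 him)

lemma memLp_inv_sub [IsFiniteMeasure μ] (hw : w ∈ UHP) (p : ENNReal) :
    MemLp (fun x : ℝ ↦ ((x : ℂ) - w)⁻¹) p μ := by
  have hcont : Continuous fun x : ℝ ↦ ((x : ℂ) - w)⁻¹ :=
    Continuous.inv₀ (by fun_prop) (ofReal_sub_ne_zero hw)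
  refine .of_bound hcont.aestronglyMeasurable w.im⁻¹ (ae_of_all _ fun x ↦ ?_)
  have him : |w.im| ≤ ‖(x : ℂ) - w‖ := by
    simpa using Complex.abs_im_le_norm ((x : ℂ) - w)
  rw [norm_inv]
  exact inv_anti₀ hw ((le_abs_self _).trans him)

lemma integrable_inv_sub [IsFiniteMeasure μ] (hw : w ∈ UHP) :
    Integrable (fun x : ℝ ↦ ((x : ℂ) - w)⁻¹) μ :=
  memLp_one_iff_integrable.1 (memLp_inv_sub hw 1)

lemma integrable_norm_inv_sub_sq [IsFiniteMeasure μ] (hw : w ∈ UHP) :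
    Integrable (fun x : ℝ ↦ ‖((x : ℂ) - w)⁻¹‖ ^ 2) μ :=
  MemLp.integrable_norm_pow (p := 2) (memLp_inv_sub hw 2) two_ne_zero

lemma Ifun_eq_integral_norm_sq (μ : Measure ℝ) (w : ℂ) :
    Ifun μ w = ∫ x, ‖((x : ℂ) - w)⁻¹‖ ^ 2 ∂μ := by
  simp only [Ifun, norm_inv, inv_pow, Complex.normSq_eq_norm_sq]

lemma Ifun_nonneg (μ : Measure ℝ) (w : ℂ) : 0 ≤ Ifun μ w :=
  integral_nonneg fun _ ↦ inv_nonneg.2 (Complex.normSq_nonneg _)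

lemma Ifun_pos [IsFiniteMeasure μ] [NeZero μ] (hw : w ∈ UHP) : 0 < Ifun μ w := by
  have hsupp : Function.support (fun x : ℝ ↦ ‖((x : ℂ) - w)⁻¹‖ ^ 2) = Set.univ := by
    ext x
    simpa using ofReal_sub_ne_zero hw x
  rw [Ifun_eq_integral_norm_sq, integral_pos_iff_support_of_nonneg (fun _ ↦ sq_nonneg _)
    (integrable_norm_inv_sub_sq hw), hsupp]
  exact (NeZero.ne (μ Set.univ)).bot_lt

lemma stT_im [IsFiniteMeasure μ] (hw : w ∈ UHP) : (stT μ w).im = w.im * Ifun μ w := by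
  have him : (stT μ w).im = ∫ x : ℝ, (((x : ℂ) - w)⁻¹).im ∂μ :=
    (integral_im (integrable_inv_sub hw)).symm
  rw [him, Ifun, ← integral_const_mul]
  simp [Complex.inv_im, div_eq_mul_inv]

lemma stT_ne_zero [IsFiniteMeasure μ] [NeZero μ] (hw : w ∈ UHP) : stT μ w ≠ 0 := fun h ↦ by
  have him : 0 < (stT μ w).im := stT_im (μ := μ) hw ▸ mul_pos hw (Ifun_pos hw)
  simp [h] at him

lemma nrT_mul_stT [IsFiniteMeasure μ] [NeZero μ] (hw : w ∈ UHP) : nrT μ w * stT μ w = -1 := by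
  rw [nrT, neg_mul, inv_mul_cancel₀ (stT_ne_zero hw)]

lemma nrT_im [IsFiniteMeasure μ] (hw : w ∈ UHP) :
    (nrT μ w).im = w.im * (Ifun μ w * ‖nrT μ w‖ ^ 2) := by
  rw [nrT, norm_neg, norm_inv, Complex.neg_im, Complex.inv_im, stT_im hw,
    Complex.normSq_eq_norm_sq]
  ring

end CauchyTransform

section Nevanlinna

variable {μ : Measure ℝ} {w : ℂ}

/-- The function `I_μ̂` of the measure `μ̂` in the Nevanlinna representation of `F_μ`. It is encoded
as `I_μ |F_μ|² - 1`, which equals `I_μ̂` on the upper half-plane by comparing imaginary parts in the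
representation, so that `μ̂` itself need not be constructed. -/
noncomputable def nevanlinnaIfun (μ : Measure ℝ) (w : ℂ) : ℝ :=
  Ifun μ w * ‖nrT μ w‖ ^ 2 - 1

lemma nrT_im_eq_add_nevanlinnaIfun [IsFiniteMeasure μ] (hw : w ∈ UHP) :
    (nrT μ w).im = w.im + w.im * nevanlinnaIfun μ w := by
  rw [nrT_im hw, nevanlinnaIfun]
  ring

-- The integrand is `|F_μ(w) (1/(x - w) - m_μ(w))|²`, so the integral is a rescaled variance.
lemma nevanlinnaIfun_eq_integral [IsProbabilityMeasure μ] (hw : w ∈ UHP) :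
    nevanlinnaIfun μ w = ∫ x : ℝ, ‖nrT μ w * ((x : ℂ) - w)⁻¹ + 1‖ ^ 2 ∂μ := by
  set F := nrT μ w
  have hlin : Integrable (fun x : ℝ ↦ F * ((x : ℂ) - w)⁻¹) μ :=
    (integrable_inv_sub hw).const_mul F
  have hsq : Integrable (fun x : ℝ ↦ ‖F‖ ^ 2 * ‖((x : ℂ) - w)⁻¹‖ ^ 2) μ :=
    (integrable_norm_inv_sub_sq hw).const_mul _
  have hreal : Integrable (fun x : ℝ ↦ 2 * (F * ((x : ℂ) - w)⁻¹).re) μ :=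
    hlin.re.const_mul 2
  have hre : ∫ x : ℝ, (F * ((x : ℂ) - w)⁻¹).re ∂μ = -1 := by
    have h : ∫ x : ℝ, (F * ((x : ℂ) - w)⁻¹).re ∂μ = (∫ x : ℝ, F * ((x : ℂ) - w)⁻¹ ∂μ).re :=
      integral_re hlin
    rw [h, integral_const_mul, ← stT, nrT_mul_stT hw, Complex.neg_re, Complex.one_re]
  have hexpand (x : ℝ) : ‖F * ((x : ℂ) - w)⁻¹ + 1‖ ^ 2 =
      ‖F‖ ^ 2 * ‖((x : ℂ) - w)⁻¹‖ ^ 2 + 1 + 2 * (F * ((x : ℂ) - w)⁻¹).re := by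
    rw [← mul_pow, ← norm_mul, ← Complex.normSq_eq_norm_sq, ← Complex.normSq_eq_norm_sq,
      Complex.normSq_add, map_one, map_one, mul_one]
  simp only [hexpand]
  rw [integral_add (f := fun x : ℝ ↦ ‖F‖ ^ 2 * ‖((x : ℂ) - w)⁻¹‖ ^ 2 + 1)
      (hsq.add (integrable_const 1)) hreal, integral_add hsq (integrable_const 1),
    integral_const_mul, integral_const_mul, hre, ← Ifun_eq_integral_norm_sq, nevanlinnaIfun]
  simp only [integral_const, probReal_univ, smul_eq_mul]
  ring

lemma nevanlinnaIfun_nonneg [IsProbabilityMeasure μ] (hw : w ∈ UHP) :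
    0 ≤ nevanlinnaIfun μ w := by
  rw [nevanlinnaIfun_eq_integral hw]
  exact integral_nonneg fun _ ↦ sq_nonneg _

lemma integrable_norm_mul_inv_sub_add_one_sq [IsFiniteMeasure μ] (hw : w ∈ UHP) (a : ℂ) :
    Integrable (fun x : ℝ ↦ ‖a * ((x : ℂ) - w)⁻¹ + 1‖ ^ 2) μ :=
  MemLp.integrable_norm_pow (p := 2) (((memLp_inv_sub hw 2).const_mul a).add (memLp_const 1))
    two_ne_zero

end Nevanlinna

section Support

variable {μ : Measure ℝ} {w : ℂ}

lemma msupp_eq_support (μ : Measure ℝ) : msupp μ = μ.support := by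
  ext x
  exact (nhds_basis_Ioo_pos x).mem_measureSupport.symm

lemma msupp_nonempty (μ : Measure ℝ) [NeZero μ] : (msupp μ).Nonempty :=
  msupp_eq_support μ ▸ Measure.nonempty_support (NeZero.ne μ)

lemma exists_measureReal_away_ge [IsFiniteMeasure μ] (h : (msupp μ).Nontrivial) :
    ∃ M δ m : ℝ, 0 ≤ M ∧ 0 < δ ∧ 0 < m ∧ ∀ v, m ≤ μ.real {x | |x| ≤ M ∧ δ ≤ |x - v|} := by
  obtain ⟨p, hp, q, hq, hpq⟩ := h.exists_lt
  set δ := (q - p) / 4 with hδ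
  have hδ0 : 0 < δ := by linarith
  have hpos {y : ℝ} (hy : y ∈ msupp μ) : 0 < μ.real (Set.Ioo (y - δ) (y + δ)) :=
    ENNReal.toReal_pos (hy δ hδ0).ne' (measure_ne_top μ _)
  refine ⟨|p| + |q| + δ, δ, min (μ.real (Set.Ioo (p - δ) (p + δ)))
    (μ.real (Set.Ioo (q - δ) (q + δ))), by positivity, hδ0, lt_min (hpos hp) (hpos hq),
    fun v ↦ ?_⟩
  rcases le_total v ((p + q) / 2) with hv | hv
  · refine (min_le_right _ _).trans (measureReal_mono fun x hx ↦ ⟨?_, ?_⟩)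
    · exact abs_le.2 ⟨by linarith [hx.1, neg_abs_le q, abs_nonneg p],
        by linarith [hx.2, le_abs_self q, abs_nonneg p]⟩
    · exact le_abs.2 (.inl (by linarith [hx.1]))
  · refine (min_le_left _ _).trans (measureReal_mono fun x hx ↦ ⟨?_, ?_⟩)
    · exact abs_le.2 ⟨by linarith [hx.1, neg_abs_le p, abs_nonneg q],
        by linarith [hx.2, le_abs_self p, abs_nonneg q]⟩
    · exact le_abs.2 (.inr (by linarith [hx.2]))

lemma div_add_norm_le_norm_mul_inv_sub_add_one (hw : w ∈ UHP) {M δ x : ℝ} {a : ℂ}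
    (hx : |x| ≤ M) (hδ : δ ≤ |x - (w - a).re|) :
    δ / (M + ‖w‖) ≤ ‖a * ((x : ℂ) - w)⁻¹ + 1‖ := by
  have hne := ofReal_sub_ne_zero hw x
  have hnum : |x - (w - a).re| ≤ ‖(x : ℂ) - (w - a)‖ := by
    simpa using Complex.abs_re_le_norm ((x : ℂ) - (w - a))
  have hden : ‖(x : ℂ) - w‖ ≤ M + ‖w‖ :=
    (norm_sub_le _ _).trans (by rw [Complex.norm_real, Real.norm_eq_abs]; gcongr)
  calc δ / (M + ‖w‖) ≤ ‖(x : ℂ) - (w - a)‖ / ‖(x : ℂ) - w‖ :=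
        div_le_div₀ (norm_nonneg _) (hδ.trans hnum) (norm_pos_iff.2 hne) hden
    _ = ‖a * ((x : ℂ) - w)⁻¹ + 1‖ := by
        rw [← norm_div]
        congr 1
        field_simp
        ring

lemma exists_div_le_nevanlinnaIfun [IsProbabilityMeasure μ] (h : (msupp μ).Nontrivial) :
    ∃ c > 0, ∀ w ∈ UHP, c / (1 + ‖w‖) ^ 2 ≤ nevanlinnaIfun μ w := by
  obtain ⟨M, δ, m, hM, hδ, hm, hmass⟩ := exists_measureReal_away_ge h
  refine ⟨(δ / (M + 1)) ^ 2 * m, by positivity, fun w hw ↦ ?_⟩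
  set F := nrT μ w
  calc (δ / (M + 1)) ^ 2 * m / (1 + ‖w‖) ^ 2
      = (δ / ((M + 1) * (1 + ‖w‖))) ^ 2 * m := by field_simp
    _ ≤ (δ / (M + ‖w‖)) ^ 2 * m := by
        have hpos : 0 < M + ‖w‖ :=
          add_pos_of_nonneg_of_pos hM (norm_pos_iff.2 (by rintro rfl; simp [UHP] at hw))
        gcongr
        nlinarith [norm_nonneg w]
    _ ≤ (δ / (M + ‖w‖)) ^ 2 *
          μ.real {x : ℝ | (δ / (M + ‖w‖)) ^ 2 ≤ ‖F * ((x : ℂ) - w)⁻¹ + 1‖ ^ 2} := by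
        gcongr
        refine (hmass (w - F).re).trans (measureReal_mono fun x hx ↦ ?_)
        exact pow_le_pow_left₀ (by positivity)
          (div_add_norm_le_norm_mul_inv_sub_add_one hw hx.1 hx.2) 2
    _ ≤ nevanlinnaIfun μ w := by
        rw [nevanlinnaIfun_eq_integral hw]
        exact mul_meas_ge_le_integral_of_nonneg (ae_of_all _ fun _ ↦ sq_nonneg _)
          (integrable_norm_mul_inv_sub_add_one_sq hw F) _

end Support

section SupportBlowUp

lemma sq_integral_norm_le {α E : Type*} [MeasurableSpace α] [NormedAddCommGroup E]
    {ν : Measure α} [IsFiniteMeasure ν] {f : α → E} (hf : MemLp f 2 ν) :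
    (∫ a, ‖f a‖ ∂ν) ^ 2 ≤ ν.real Set.univ * ∫ a, ‖f a‖ ^ 2 ∂ν := by
  have hholder := integral_mul_le_Lp_mul_Lq_of_nonneg (μ := ν) (f := fun _ ↦ (1 : ℝ))
    (g := fun a ↦ ‖f a‖) Real.HolderConjugate.two_two (ae_of_all _ fun _ ↦ zero_le_one)
    (ae_of_all _ fun _ ↦ norm_nonneg _) (memLp_const 1) (by simpa using hf.norm)
  simp only [one_mul, Real.rpow_two, one_pow, integral_const, smul_eq_mul, mul_one,
    ← Real.sqrt_eq_rpow] at hholder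
  rw [← Real.sqrt_mul measureReal_nonneg] at hholder
  exact (Real.le_sqrt (integral_nonneg fun _ ↦ norm_nonneg _)
    (mul_nonneg measureReal_nonneg (integral_nonneg fun _ ↦ sq_nonneg _))).1 hholder

variable {μ : Measure ℝ} {w : ℂ} {x : ℝ}

lemma norm_setIntegral_inv_sub_sq_le [IsFiniteMeasure μ] (hw : w ∈ UHP) (s : Set ℝ) :
    ‖∫ y in s, ((y : ℂ) - w)⁻¹ ∂μ‖ ^ 2 ≤ μ.real s * Ifun μ w := by
  calc ‖∫ y in s, ((y : ℂ) - w)⁻¹ ∂μ‖ ^ 2 ≤ (∫ y in s, ‖((y : ℂ) - w)⁻¹‖ ∂μ) ^ 2 := by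
        gcongr
        exact norm_integral_le_integral_norm _
    _ ≤ μ.real s * ∫ y in s, ‖((y : ℂ) - w)⁻¹‖ ^ 2 ∂μ := by
        simpa only [measureReal_restrict_apply_univ] using
          sq_integral_norm_le (memLp_inv_sub (μ := μ.restrict s) hw 2)
    _ ≤ μ.real s * Ifun μ w := by
        rw [Ifun_eq_integral_norm_sq]
        exact mul_le_mul_of_nonneg_left (setIntegral_le_integral (integrable_norm_inv_sub_sq hw)
          (ae_of_all _ fun _ ↦ sq_nonneg _)) measureReal_nonneg

lemma norm_setIntegral_compl_closedBall_inv_sub_le [IsFiniteMeasure μ] {δ : ℝ} (hδ : 0 < δ)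
    (hx : ‖w - x‖ ≤ δ) :
    ‖∫ y in (Metric.closedBall x (2 * δ))ᶜ, ((y : ℂ) - w)⁻¹ ∂μ‖ ≤ μ.real Set.univ / δ := by
  set B := Metric.closedBall x (2 * δ)
  calc ‖∫ y in Bᶜ, ((y : ℂ) - w)⁻¹ ∂μ‖ ≤ δ⁻¹ * μ.real Bᶜ := by
        refine norm_setIntegral_le_of_norm_le_const (measure_lt_top μ _) fun y hy ↦ ?_
        have hyx : 2 * δ < ‖(y : ℂ) - x‖ := by
          rw [← Complex.ofReal_sub, Complex.norm_real, ← dist_eq_norm]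
          exact not_le.1 hy
        have htri := norm_sub_le_norm_sub_add_norm_sub (y : ℂ) w x
        rw [norm_inv]
        exact inv_anti₀ hδ (by linarith)
    _ ≤ δ⁻¹ * μ.real Set.univ :=
        mul_le_mul_of_nonneg_left (measureReal_mono (Set.subset_univ _)) (by positivity)
    _ = μ.real Set.univ / δ := inv_mul_eq_div _ _

lemma norm_stT_sq_le [IsFiniteMeasure μ] (hw : w ∈ UHP) {δ : ℝ} (hδ : 0 < δ)
    (hx : ‖w - x‖ ≤ δ) :
    ‖stT μ w‖ ^ 2 ≤ 2 * μ.real (Metric.closedBall x (2 * δ)) * Ifun μ w +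
      2 * (μ.real Set.univ / δ) ^ 2 := by
  set B := Metric.closedBall x (2 * δ)
  set near := ∫ y in B, ((y : ℂ) - w)⁻¹ ∂μ
  set far := ∫ y in Bᶜ, ((y : ℂ) - w)⁻¹ ∂μ
  calc ‖stT μ w‖ ^ 2 = ‖near + far‖ ^ 2 := by
        rw [integral_add_compl measurableSet_closedBall (integrable_inv_sub hw), stT]
    _ ≤ (‖near‖ + ‖far‖) ^ 2 := by
        gcongr
        exact norm_add_le _ _
    _ ≤ 2 * (‖near‖ ^ 2 + ‖far‖ ^ 2) := add_sq_le
    _ ≤ 2 * (μ.real B * Ifun μ w + (μ.real Set.univ / δ) ^ 2) := by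
        gcongr
        · exact norm_setIntegral_inv_sub_sq_le hw B
        · exact norm_setIntegral_compl_closedBall_inv_sub_le hδ hx
    _ = 2 * μ.real B * Ifun μ w + 2 * (μ.real Set.univ / δ) ^ 2 := by ring

lemma exists_measureReal_closedBall_lt [IsFiniteMeasure μ] (hx : μ {x} = 0) {ε : ℝ}
    (hε : 0 < ε) : ∃ δ > 0, μ.real (Metric.closedBall x δ) < ε := by
  obtain ⟨U, hxU, hU, hμU⟩ := Set.exists_isOpen_lt_of_lt {x} (ENNReal.ofReal ε)
    (hx ▸ ENNReal.ofReal_pos.2 hε)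
  obtain ⟨δ, hδ, hball⟩ := Metric.nhds_basis_closedBall.mem_iff.1
    (hU.mem_nhds (Set.singleton_subset_iff.1 hxU))
  exact ⟨δ, hδ, (measureReal_mono hball).trans_lt
    ((ENNReal.lt_ofReal_iff_toReal_lt (measure_ne_top μ U)).1 hμU)⟩

open Asymptotics

lemma norm_stT_sq_isLittleO_Ifun [IsFiniteMeasure μ] (hx : μ {x} = 0)
    (hI : Tendsto (Ifun μ) (𝓝[UHP] (x : ℂ)) atTop) :
    (fun w ↦ ‖stT μ w‖ ^ 2) =o[𝓝[UHP] (x : ℂ)] Ifun μ := by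
  refine isLittleO_iff.2 fun ε hε ↦ ?_
  obtain ⟨δ, hδ, hball⟩ := exists_measureReal_closedBall_lt hx (ε := ε / 4) (by positivity)
  set C := 2 * (μ.real Set.univ / (δ / 2)) ^ 2
  have hnear : ∀ᶠ w : ℂ in 𝓝[UHP] (x : ℂ), ‖w - x‖ ≤ δ / 2 := by
    filter_upwards [nhdsWithin_le_nhds (Metric.closedBall_mem_nhds (x : ℂ) (half_pos hδ))]
      with w hw
    rwa [← dist_eq_norm]
  filter_upwards [hnear, self_mem_nhdsWithin, hI.eventually_ge_atTop (C / (ε / 2))]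
    with w hwx hw hIw
  have hI0 := Ifun_nonneg μ w
  rw [Real.norm_of_nonneg (sq_nonneg _), Real.norm_of_nonneg hI0]
  rw [div_le_iff₀' (by positivity)] at hIw
  have hbound : ‖stT μ w‖ ^ 2 ≤ 2 * μ.real (Metric.closedBall x δ) * Ifun μ w + C := by
    simpa only [mul_div_cancel₀ δ two_ne_zero] using norm_stT_sq_le (μ := μ) hw (half_pos hδ) hwx
  have hmass : 2 * μ.real (Metric.closedBall x δ) * Ifun μ w ≤ 2 * (ε / 4) * Ifun μ w := by
    gcongr
  linarith

lemma one_add_norm_nrT_sq_isLittleO_nevanlinnaIfun [IsFiniteMeasure μ] [NeZero μ]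
    (hx : μ {x} = 0) (hI : Tendsto (Ifun μ) (𝓝[UHP] (x : ℂ)) atTop) :
    (fun w ↦ 1 + ‖nrT μ w‖ ^ 2) =o[𝓝[UHP] (x : ℂ)] nevanlinnaIfun μ := by
  have hsum : (fun w ↦ ‖stT μ w‖ ^ 2 + 1) =o[𝓝[UHP] (x : ℂ)] Ifun μ :=
    (norm_stT_sq_isLittleO_Ifun hx hI).add
      ((isLittleO_const_left (F'' := ℝ)).2 (.inr (tendsto_norm_atTop_atTop.comp hI)))
  have hmul : (fun w ↦ 1 + ‖nrT μ w‖ ^ 2) =o[𝓝[UHP] (x : ℂ)]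
      fun w ↦ Ifun μ w * ‖nrT μ w‖ ^ 2 := by
    refine (hsum.mul_isBigO (isBigO_refl (fun w ↦ ‖nrT μ w‖ ^ 2) _)).congr' ?_ .rfl
    filter_upwards [self_mem_nhdsWithin] with w hw
    rw [add_mul, ← mul_pow, ← norm_mul, mul_comm (stT μ w), nrT_mul_stT hw, norm_neg, norm_one,
      one_pow, one_mul]
  have hone : (fun _ ↦ (1 : ℝ)) =o[𝓝[UHP] (x : ℂ)] fun w ↦ Ifun μ w * ‖nrT μ w‖ ^ 2 :=
    (IsBigO.of_norm_le fun w ↦ by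
      rw [norm_one]
      exact le_add_of_nonneg_right (sq_nonneg _)).trans_isLittleO hmul
  exact hmul.trans_isBigO hone.right_isBigO_sub

lemma measureReal_closedBall_div_le_Ifun [IsFiniteMeasure μ] (hw : w ∈ UHP) (x : ℝ) :
    μ.real (Metric.closedBall x ‖w - x‖) / (2 * ‖w - x‖) ^ 2 ≤ Ifun μ w := by
  set r := ‖w - x‖
  rw [Ifun_eq_integral_norm_sq, div_eq_inv_mul]
  refine le_trans (mul_le_mul_of_nonneg_left (measureReal_mono fun y hy ↦ ?_) (by positivity))
    (mul_meas_ge_le_integral_of_nonneg (ae_of_all _ fun _ ↦ sq_nonneg _)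
      (integrable_norm_inv_sub_sq hw) ((2 * r) ^ 2)⁻¹)
  have hyx : ‖(y : ℂ) - x‖ ≤ r := by
    simpa [← Complex.ofReal_sub, Real.dist_eq] using hy
  have htri : ‖(y : ℂ) - w‖ ≤ 2 * r := by
    linarith [norm_sub_le_norm_sub_add_norm_sub (y : ℂ) x w, norm_sub_rev (x : ℂ) w]
  have hpos : 0 < ‖(y : ℂ) - w‖ := norm_pos_iff.2 (ofReal_sub_ne_zero hw y)
  rw [Set.mem_ofPred_eq, norm_inv, inv_pow]
  gcongr

lemma tendsto_Ifun_atTop [IsFiniteMeasure μ]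
    (hx : Tendsto (fun r ↦ μ.real (Metric.closedBall x r) / r ^ 2) (𝓝[>] 0) atTop) :
    Tendsto (Ifun μ) (𝓝[UHP] (x : ℂ)) atTop := by
  have hdist : Tendsto (fun w : ℂ ↦ ‖w - x‖) (𝓝[UHP] (x : ℂ)) (𝓝[>] 0) := by
    refine tendsto_nhdsWithin_iff.2 ⟨?_, ?_⟩
    · have hcont : Continuous fun w : ℂ ↦ ‖w - x‖ := by fun_prop
      simpa using (hcont.tendsto x).mono_left nhdsWithin_le_nhds
    · filter_upwards [self_mem_nhdsWithin] with w hw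
      rw [Set.mem_Ioi, norm_sub_rev]
      exact norm_pos_iff.2 (ofReal_sub_ne_zero hw x)
  refine tendsto_atTop_mono' _ ?_ ((hx.comp hdist).atTop_div_const (zero_lt_four' ℝ))
  filter_upwards [self_mem_nhdsWithin] with w hw
  refine le_of_eq_of_le ?_ (measureReal_closedBall_div_le_Ifun hw x)
  simp only [Function.comp_apply]
  ring

end SupportBlowUp

section Assumption

/-- Balls of radius `r` about each point of the support of `μ` have mass of larger order than `r²`
as `r → 0`. This is what densities with power law exponents in `(-1, 1)` guarantee, and what makes
`∫ 1/|x - w|² dμ(x)` blow up as `w` approaches the support. -/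
def SuperquadraticMass (μ : Measure ℝ) : Prop :=
  ∀ x ∈ msupp μ, Tendsto (fun r ↦ μ.real (Metric.closedBall x r) / r ^ 2) (𝓝[>] 0) atTop

lemma rpow_sub_mul_rpow_le_rpow {s t y L : ℝ} (hst : s ≤ t) (hy : 0 < y) (hyL : y ≤ L) :
    L ^ (s - t) * y ^ t ≤ y ^ s := by
  calc L ^ (s - t) * y ^ t ≤ y ^ (s - t) * y ^ t :=
        mul_le_mul_of_nonneg_right (Real.rpow_le_rpow_of_nonpos hy hyL (sub_nonpos.2 hst))
          (Real.rpow_nonneg hy.le t)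
    _ = y ^ s := by rw [← Real.rpow_add hy, sub_add_cancel]

lemma exists_mul_min_rpow_le {A B : ℝ} (hAB : A < B) {s s' t : ℝ} (hs : s ≤ t) (hs' : s' ≤ t)
    (ht : 0 ≤ t) :
    ∃ c > 0, ∀ x ∈ Set.Ioo A B,
      c * min (x - A) (B - x) ^ t ≤ (x - A) ^ s * (B - x) ^ s' := by
  have : 0 < B - A := sub_pos.2 hAB
  refine ⟨(B - A) ^ (s - t) * (B - A) ^ (s' - t) * ((B - A) / 2) ^ t, by positivity,
    fun x ⟨hAx, hxB⟩ ↦ ?_⟩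
  have hx : 0 < x - A := sub_pos.2 hAx
  have hx' : 0 < B - x := sub_pos.2 hxB
  have hmin : (B - A) / 2 * min (x - A) (B - x) ≤ (x - A) * (B - x) := by
    rcases min_cases (x - A) (B - x) with ⟨h, _⟩ | ⟨h, _⟩ <;> rw [h] <;> nlinarith
  calc (B - A) ^ (s - t) * (B - A) ^ (s' - t) * ((B - A) / 2) ^ t * min (x - A) (B - x) ^ t
      = (B - A) ^ (s - t) * (B - A) ^ (s' - t) * ((B - A) / 2 * min (x - A) (B - x)) ^ t := by
        rw [Real.mul_rpow (by positivity) (by positivity)]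
        ring
    _ ≤ (B - A) ^ (s - t) * (B - A) ^ (s' - t) * ((x - A) * (B - x)) ^ t := by gcongr
    _ = ((B - A) ^ (s - t) * (x - A) ^ t) * ((B - A) ^ (s' - t) * (B - x) ^ t) := by
        rw [Real.mul_rpow hx.le hx'.le]
        ring
    _ ≤ (x - A) ^ s * (B - x) ^ s' := by
        gcongr
        · exact rpow_sub_mul_rpow_le_rpow hs hx (by linarith)
        · exact rpow_sub_mul_rpow_le_rpow hs' hx' (by linarith)

lemma exists_Icc_subset_closedBall_away {A B x r : ℝ} (hx : x ∈ Set.Icc A B) (hr : 0 < r)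
    (hrL : r ≤ (B - A) / 4) :
    ∃ a, Set.Icc a (a + r / 2) ⊆
      Metric.closedBall x r ∩ {y | y ∈ Set.Ioo A B ∧ r / 2 ≤ min (y - A) (B - y)} := by
  obtain ⟨hAx, hxB⟩ := hx
  simp only [Real.closedBall_eq_Icc]
  rcases le_total x ((A + B) / 2) with hmid | hmid
  · exact ⟨x + r / 2, fun y ⟨h₁, h₂⟩ ↦ ⟨⟨by linarith, by linarith⟩,
      ⟨by linarith, by linarith⟩, le_min (by linarith) (by linarith)⟩⟩
  · exact ⟨x - r, fun y ⟨h₁, h₂⟩ ↦ ⟨⟨by linarith, by linarith⟩,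
      ⟨by linarith, by linarith⟩, le_min (by linarith) (by linarith)⟩⟩

lemma ofReal_mul_volume_le_withDensity {ρ : ℝ → ℝ} {κ : ℝ} {s : Set ℝ} (hs : MeasurableSet s)
    (hρ : ∀ᵐ y, y ∈ s → κ ≤ ρ y) :
    ENNReal.ofReal κ * volume s ≤ volume.withDensity (fun y ↦ ENNReal.ofReal (ρ y)) s := by
  rw [withDensity_apply _ hs, ← setLIntegral_const]
  refine setLIntegral_mono_ae' hs ?_
  filter_upwards [hρ] with y hy hys using ENNReal.ofReal_le_ofReal (hy hys)

variable {μ : Measure ℝ} {n : ℕ} {Am Ap : Fin n → ℝ} {ρ : ℝ → ℝ}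

lemma Assumption2.exists_density_ge (h : Assumption2 μ n Am Ap ρ) (j : Fin n) :
    ∃ c > 0, ∃ t ∈ Set.Ico (0 : ℝ) 1, ∀ᵐ y, y ∈ Set.Ioo (Am j) (Ap j) →
      c * min (y - Am j) (Ap j - y) ^ t ≤ ρ y := by
  obtain ⟨s, s', C, -, hs, -, hs', hC, hpow⟩ := h.power_law j
  have : 0 < C := one_pos.trans_le hC
  set t := max (max s s') 0
  obtain ⟨c, hc, hle⟩ := exists_mul_min_rpow_le (h.lt j) (t := t)
    ((le_max_left s s').trans (le_max_left _ _)) ((le_max_right s s').trans (le_max_left _ _))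
    (le_max_right _ _)
  refine ⟨C⁻¹ * c, by positivity, t,
    ⟨le_max_right _ _, max_lt (max_lt hs hs') one_pos⟩, ?_⟩
  filter_upwards [hpow] with y hy hmem
  have hA : 0 < y - Am j := sub_pos.2 hmem.1
  have hB : 0 < Ap j - y := sub_pos.2 hmem.2
  have hlt := (lt_div_iff₀ (by positivity)).1 (hy (Set.Ioo_subset_Icc_self hmem)).1
  rw [mul_assoc]
  exact (mul_le_mul_of_nonneg_left (hle y hmem) (by positivity)).trans hlt.le

lemma Assumption2.exists_rpow_le_measureReal_closedBall (h : Assumption2 μ n Am Ap ρ) {x : ℝ}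
    (hx : x ∈ msupp μ) :
    ∃ c > 0, ∃ t < (1 : ℝ), ∀ᶠ r in 𝓝[>] 0, c * r ^ (t + 1) ≤ μ.real (Metric.closedBall x r) := by
  have := h.prob
  rw [h.supp_eq, Set.mem_iUnion] at hx
  obtain ⟨j, hx⟩ := hx
  obtain ⟨c, hc, t, ⟨ht₀, ht₁⟩, hρ⟩ := h.exists_density_ge j
  refine ⟨c / 2 ^ (t + 1), by positivity, t, ht₁, ?_⟩
  have hL : 0 < (Ap j - Am j) / 4 := by linarith [h.lt j]
  filter_upwards [Ioc_mem_nhdsGT hL] with r ⟨hr, hrL⟩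
  obtain ⟨a, ha⟩ := exists_Icc_subset_closedBall_away hx hr hrL
  set U := Set.Icc a (a + r / 2)
  have hκ : ∀ᵐ y, y ∈ U → c * (r / 2) ^ t ≤ ρ y := by
    filter_upwards [hρ] with y hy hyU
    refine le_trans ?_ (hy (ha hyU).2.1)
    gcongr
    exact (ha hyU).2.2
  have hmass : ENNReal.ofReal (c * (r / 2) ^ t * (r / 2)) ≤ μ U := by
    conv_rhs => rw [h.ac]
    refine le_of_eq_of_le ?_ (ofReal_mul_volume_le_withDensity measurableSet_Icc hκ)
    rw [Real.volume_Icc, add_sub_cancel_left, ENNReal.ofReal_mul (by positivity)]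
  calc c / 2 ^ (t + 1) * r ^ (t + 1) = c * (r / 2) ^ t * (r / 2) := by
        rw [mul_assoc, ← Real.rpow_add_one (by positivity), Real.div_rpow hr.le zero_le_two]
        ring
    _ ≤ μ.real U := (ENNReal.ofReal_le_iff_le_toReal (measure_ne_top μ U)).1 hmass
    _ ≤ μ.real (Metric.closedBall x r) := measureReal_mono (ha.trans Set.inter_subset_left)

lemma Assumption2.superquadraticMass (h : Assumption2 μ n Am Ap ρ) : SuperquadraticMass μ := by
  intro x hx
  obtain ⟨c, hc, t, ht, hmass⟩ := h.exists_rpow_le_measureReal_closedBall hx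
  refine tendsto_atTop_mono' _ ?_
    ((tendsto_rpow_neg_nhdsGT_zero (sub_neg.2 ht)).const_mul_atTop hc)
  filter_upwards [hmass, self_mem_nhdsWithin] with r hr (hr0 : 0 < r)
  rw [le_div_iff₀ (by positivity)]
  refine le_of_eq_of_le ?_ hr
  rw [mul_assoc, ← Real.rpow_two, ← Real.rpow_add hr0]
  congr 2
  ring

lemma Assumption2.nullSingletonClass (h : Assumption2 μ n Am Ap ρ) : NullSingletonClass μ where
  measure_singleton x := by
    rw [h.ac]
    exact withDensity_absolutelyContinuous _ _ Real.volume_singleton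

lemma Assumption2.isCompact_msupp (h : Assumption2 μ n Am Ap ρ) : IsCompact (msupp μ) :=
  h.supp_eq ▸ isCompact_iUnion fun _ ↦ isCompact_Icc

lemma Assumption2.msupp_nontrivial (h : Assumption2 μ n Am Ap ρ) : (msupp μ).Nontrivial := by
  have hle := (h.lt ⟨0, h.n_pos⟩).le
  rw [h.supp_eq]
  exact ⟨_, Set.mem_iUnion_of_mem _ (Set.left_mem_Icc.2 hle),
    _, Set.mem_iUnion_of_mem _ (Set.right_mem_Icc.2 hle), (h.lt _).ne⟩

end Assumption

section Subordination

open Asymptotics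

variable {μa μb : Measure ℝ} {ωa ωb : ℂ → ℂ}

lemma IsSubordPair.symm (h : IsSubordPair μa μb ωa ωb) : IsSubordPair μb μa ωb ωa where
  diff_a := h.diff_b
  diff_b := h.diff_a
  maps_a := h.maps_b
  maps_b := h.maps_a
  imLe_a := h.imLe_b
  imLe_b := h.imLe_a
  lim_a := h.lim_b
  lim_b := h.lim_a
  eqn_a z hz := add_comm (ωa z) (ωb z) ▸ h.eqn_b z hz
  eqn_b z hz := add_comm (ωa z) (ωb z) ▸ h.eqn_a z hz

lemma IsSubordPair.nevanlinnaIfun_mul_le_one [IsFiniteMeasure μa] [IsFiniteMeasure μb]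
    (h : IsSubordPair μa μb ωa ωb) {z : ℂ} (hz : z ∈ UHP) :
    nevanlinnaIfun μa (ωb z) * nevanlinnaIfun μb (ωa z) ≤ 1 := by
  have hz0 : 0 < z.im := hz
  have ha0 : 0 < (ωa z).im := h.maps_a z hz
  have hb0 : 0 < (ωb z).im := h.maps_b z hz
  have ha : (ωb z).im * nevanlinnaIfun μa (ωb z) = (ωa z).im - z.im := by
    have him := congrArg Complex.im (h.eqn_a z hz)
    rw [nrT_im_eq_add_nevanlinnaIfun (h.maps_b z hz), Complex.sub_im, Complex.add_im] at him
    linarith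
  have hb : (ωa z).im * nevanlinnaIfun μb (ωa z) = (ωb z).im - z.im := by
    have him := congrArg Complex.im (h.eqn_b z hz)
    rw [nrT_im_eq_add_nevanlinnaIfun (h.maps_a z hz), Complex.sub_im, Complex.add_im] at him
    linarith
  refine le_of_mul_le_mul_left ?_ (mul_pos ha0 hb0)
  calc (ωa z).im * (ωb z).im * (nevanlinnaIfun μa (ωb z) * nevanlinnaIfun μb (ωa z))
      = ((ωa z).im - z.im) * ((ωb z).im - z.im) := by
        rw [← ha, ← hb]
        ring
    _ ≤ (ωa z).im * (ωb z).im := by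
        have := sub_nonneg.2 (h.imLe_b z hz)
        gcongr <;> linarith
    _ = (ωa z).im * (ωb z).im * 1 := (mul_one _).symm

lemma IsSubordPair.nevanlinnaIfun_isBigO [IsProbabilityMeasure μa] [IsProbabilityMeasure μb]
    (h : IsSubordPair μa μb ωa ωb) (hμa : (msupp μa).Nontrivial) {l : Filter ℂ} (hl : l ≤ 𝓟 UHP)
    (hbdd : (fun z ↦ z - ωa z) =O[l] fun _ ↦ (1 : ℝ)) :
    (fun z ↦ nevanlinnaIfun μb (ωa z)) =O[l] fun z ↦ 1 + ‖nrT μb (ωa z)‖ ^ 2 := by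
  obtain ⟨c, hc, hle⟩ := exists_div_le_nevanlinnaIfun hμa
  obtain ⟨K, hK, hbdd⟩ := hbdd.exists_nonneg
  refine IsBigO.of_bound (2 * (1 + K) ^ 2 / c) ?_
  filter_upwards [hbdd.bound, le_principal_iff.1 hl] with z hzK hz
  rw [norm_one, mul_one] at hzK
  set F := nrT μb (ωa z)
  set N := nevanlinnaIfun μb (ωa z)
  have hN : 0 ≤ N := nevanlinnaIfun_nonneg (h.maps_a z hz)
  have hωb : ‖ωb z‖ ≤ ‖F‖ + K := by
    have heq : ωb z = F + (z - ωa z) := by linear_combination h.eqn_b z hz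
    exact heq ▸ (norm_add_le _ _).trans (by gcongr)
  have hprod : c / (1 + ‖ωb z‖) ^ 2 * N ≤ 1 :=
    (mul_le_mul_of_nonneg_right (hle _ (h.maps_b z hz)) hN).trans (h.nevanlinnaIfun_mul_le_one hz)
  rw [div_mul_eq_mul_div, div_le_one (by positivity)] at hprod
  rw [Real.norm_of_nonneg hN, Real.norm_of_nonneg (by positivity), div_mul_eq_mul_div,
    le_div_iff₀' hc]
  calc c * N ≤ (1 + ‖ωb z‖) ^ 2 := hprod
    _ ≤ ((1 + K) + ‖F‖) ^ 2 := by
        gcongr ?_ ^ 2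
        linarith
    _ ≤ 2 * ((1 + K) ^ 2 + ‖F‖ ^ 2) := add_sq_le
    _ ≤ 2 * (1 + K) ^ 2 * (1 + ‖F‖ ^ 2) := by
        have : 1 * ‖F‖ ^ 2 ≤ (1 + K) ^ 2 * ‖F‖ ^ 2 := by
          gcongr
          exact one_le_pow₀ (by linarith)
        linarith

lemma IsSubordPair.not_tendsto_nhds_mem_msupp [IsProbabilityMeasure μa] [IsProbabilityMeasure μb]
    [NullSingletonClass μb] (h : IsSubordPair μa μb ωa ωb) (hμa : (msupp μa).Nontrivial)
    (hμb : SuperquadraticMass μb) {x : ℝ} (hx : x ∈ msupp μb) {l : Filter ℂ} [l.NeBot]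
    (hl : l ≤ 𝓟 UHP) {E : ℂ} (hlE : l ≤ 𝓝 E) : ¬ Tendsto ωa l (𝓝 (x : ℂ)) := by
  intro htend
  have hmem : ∀ᶠ z in l, z ∈ UHP := le_principal_iff.1 hl
  have hwithin : Tendsto ωa l (𝓝[UHP] (x : ℂ)) :=
    tendsto_nhdsWithin_iff.2 ⟨htend, hmem.mono h.maps_a⟩
  have hlittle : (fun z ↦ 1 + ‖nrT μb (ωa z)‖ ^ 2) =o[l] fun z ↦ nevanlinnaIfun μb (ωa z) :=
    (one_add_norm_nrT_sq_isLittleO_nevanlinnaIfun (measure_singleton x)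
      (tendsto_Ifun_atTop (hμb x hx))).comp_tendsto hwithin
  have hbig : (fun z ↦ nevanlinnaIfun μb (ωa z)) =O[l] fun z ↦ 1 + ‖nrT μb (ωa z)‖ ^ 2 :=
    h.nevanlinnaIfun_isBigO hμa hl ((tendsto_id'.2 hlE).sub htend |>.isBigO_one ℝ)
  exact isLittleO_irrefl (.of_forall fun z ↦ by positivity) (hlittle.trans_isBigO hbig)

end Subordination

section Extension

lemma CUHP_eq_closure_UHP : CUHP = closure UHP :=
  (Complex.closure_setOfPred_lt_im 0).symm

lemma ExtendsToRP.tendsto {ω : ℂ → ℂ} {Ω : ℂ → OnePoint ℂ} (h : ExtendsToRP ω Ω) {z w : ℂ}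
    (hz : z ∈ CUHP) (hw : Ω z = w) : Tendsto ω (𝓝[UHP] z) (𝓝 w) := by
  rw [OnePoint.isOpenEmbedding_coe.isInducing.tendsto_nhds_iff, ← hw]
  exact ((h.1 z hz).mono (CUHP_eq_closure_UHP ▸ subset_closure)).congr'
    (eventually_nhdsWithin_of_forall h.2)

lemma exists_pos_le_infDist_of_ne {X Y Z : Type*} [PseudoMetricSpace X] [TopologicalSpace Y]
    [TopologicalSpace Z] [T2Space Z] {f : Y → Z} {e : X → Z} {J : Set Y} {K : Set X}
    (hf : ContinuousOn f J) (he : Continuous e) (hJ : IsCompact J) (hK : IsCompact K)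
    (hK₀ : K.Nonempty) (hne : ∀ z ∈ J, ∀ w ∈ K, f z ≠ e w) :
    ∃ C > 0, ∀ z ∈ J, ∀ w, f z = e w → C ≤ Metric.infDist w K := by
  have hclosed : IsClosed (e ⁻¹' (f '' J)) := (hJ.image_of_continuousOn hf).isClosed.preimage he
  have hdisj : Disjoint K (e ⁻¹' (f '' J)) :=
    Set.disjoint_left.2 fun w hw ⟨z, hz, hzw⟩ ↦ hne z hz w hw hzw
  obtain ⟨C, hC, hthick⟩ := hdisj.exists_thickenings hK hclosed
  refine ⟨C, hC, fun z hz w hzw ↦ ?_⟩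
  have hw : w ∈ Metric.thickening C (e ⁻¹' (f '' J)) :=
    Metric.self_subset_thickening hC _ ⟨z, hz, hzw⟩
  simpa only [Metric.mem_thickening_iff_infDist_lt hK₀, not_lt] using
    Set.disjoint_right.1 hthick hw

lemma isCompact_spectralDomain (e₁ e₂ : ℝ) :
    IsCompact {z : ℂ | z.re ∈ Set.Icc e₁ e₂ ∧ 0 ≤ z.im ∧ z.im ≤ 1} :=
  isCompact_Icc.reProdIm isCompact_Icc

end Extension

theorem subordination_away_from_supports_general {μa μb : Measure ℝ} [IsProbabilityMeasure μa]
    [IsProbabilityMeasure μb] [NullSingletonClass μb] (hμa : (msupp μa).Nontrivial)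
    (hμb : SuperquadraticMass μb) (hcpt : IsCompact (msupp μb)) {ωa ωb : ℂ → ℂ}
    (hsub : IsSubordPair μa μb ωa ωb) {Ωa : ℂ → OnePoint ℂ} (hΩa : ExtendsToRP ωa Ωa)
    {J : Set ℂ} (hJ : IsCompact J) (hJU : J ⊆ CUHP) :
    ∃ C > 0, ∀ z ∈ J, ∀ w : ℂ, Ωa z = (w : OnePoint ℂ) →
      C ≤ Metric.infDist w ((fun x : ℝ ↦ (x : ℂ)) '' msupp μb) := by
  refine exists_pos_le_infDist_of_ne (hΩa.1.mono hJU) OnePoint.continuous_coe hJ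
    (hcpt.image Complex.continuous_ofReal) ((msupp_nonempty μb).image _) ?_
  rintro z hz _ ⟨x, hx, rfl⟩ hzx
  have : (𝓝[UHP] z).NeBot := mem_closure_iff_nhdsWithin_neBot.1 (CUHP_eq_closure_UHP ▸ hJU hz)
  exact hsub.not_tendsto_nhds_mem_msupp hμa hμb hx (l := 𝓝[UHP] z) inf_le_right
    nhdsWithin_le_nhds (hΩa.tendsto (hJU hz) hzx)

lemma Assumption2.exists_pos_le_infDist_msupp {μa μb : Measure ℝ} {na nb : ℕ} {Am Ap : Fin na → ℝ}
    {Bm Bp : Fin nb → ℝ} {ρa ρb : ℝ → ℝ} (hμa : Assumption2 μa na Am Ap ρa)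
    (hμb : Assumption2 μb nb Bm Bp ρb) {ωa ωb : ℂ → ℂ} (hsub : IsSubordPair μa μb ωa ωb)
    {Ωa : ℂ → OnePoint ℂ} (hΩa : ExtendsToRP ωa Ωa) (e₁ e₂ : ℝ) :
    ∃ C > 0, ∀ z ∈ {z : ℂ | z.re ∈ Set.Icc e₁ e₂ ∧ 0 ≤ z.im ∧ z.im ≤ 1}, ∀ w : ℂ,
      Ωa z = (w : OnePoint ℂ) → C ≤ Metric.infDist w ((fun x : ℝ ↦ (x : ℂ)) '' msupp μb) := by
  have := hμa.prob
  have := hμb.prob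
  have := hμb.nullSingletonClass
  exact subordination_away_from_supports_general hμa.msupp_nontrivial hμb.superquadraticMass
    hμb.isCompact_msupp hsub hΩa (isCompact_spectralDomain e₁ e₂) fun _ hz ↦ hz.2.1

/-- On the spectral domain `𝓙`, `ω_α` stays at positive distance from
`supp(μ_β)` and `ω_β` stays at positive distance from `supp(μ_α)`. -/
theorem subordination_away_from_supports
    (μa μb μab : Measure ℝ) (na nb : ℕ)
    (Am Ap : Fin na → ℝ) (Bm Bp : Fin nb → ℝ) (ρa ρb : ℝ → ℝ)
    (hμa : Assumption2 μa na Am Ap ρa)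
    (hμb : Assumption2 μb nb Bm Bp ρb)
    (ωa ωb : ℂ → ℂ) (hsub : IsSubordPair μa μb ωa ωb)
    (hconv : IsFreeConv μa μb ωb μab)
    (Ωa Ωb : ℂ → OnePoint ℂ)
    (hΩa : ExtendsToRP ωa Ωa) (hΩb : ExtendsToRP ωb Ωb)
    -- the compact interval 𝓔 = [e₁, e₂] containing supp(μ_α ⊞ μ_β)
    (e₁ e₂ : ℝ) (hE : msupp μab ⊆ Set.Icc e₁ e₂) :
    (∃ Ca : ℝ, 0 < Ca ∧
      ∀ z ∈ {z : ℂ | z.re ∈ Set.Icc e₁ e₂ ∧ 0 ≤ z.im ∧ z.im ≤ 1},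
        ∀ w : ℂ, Ωa z = (w : OnePoint ℂ) →
          Ca ≤ Metric.infDist w ((fun x : ℝ => (x : ℂ)) '' msupp μb)) ∧
    (∃ Cb : ℝ, 0 < Cb ∧
      ∀ z ∈ {z : ℂ | z.re ∈ Set.Icc e₁ e₂ ∧ 0 ≤ z.im ∧ z.im ≤ 1},
        ∀ w : ℂ, Ωb z = (w : OnePoint ℂ) →
          Cb ≤ Metric.infDist w ((fun x : ℝ => (x : ℂ)) '' msupp μa)) :=
  ⟨hμa.exists_pos_le_infDist_msupp hμb hsub hΩa e₁ e₂,
    hμb.exists_pos_le_infDist_msupp hμa hsub.symm hΩb e₁ e₂⟩
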